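/- Let h ∈ ℕ, let α : ℤ∖{0} → ℂ, β : (ℤ∖{0}) × ℕ₀ × {1,…,h} → ℝ, and c : {1,…,h} → ℕ be given, and set λ_j = (1+(−1)^j)/2 and φ(s) = (2^{1−s} − 1)·ζ(s). For each sign ± define R_±(θ) = ∑_{m ≠ 0} (±i)^m α(m) e^{imθ/2} − 2·∑_{η=1}^{h} ∑_{k=0}^{c_η} φ(c_η − k)·λ_{c_η−k} · ∑_{ξ=0}^{k} ( ∑_{m ≠ 0} (±i)^m β(m; k−ξ; η) e^{imθ/2} ) · (iθ)^ξ/ξ!. Assume that all series occurring in R_+(θ) and R_−(θ) converge absolutely for θ ∈ [−π, π], and that both R_+ and R_− are constant functions on [−π, π]. Then for every d ∈ ℕ: ∑_{m ≠ 0} α(m)/m^d − 2·∑_{η=1}^{h} ∑_{k=0}^{⌊c_η/2⌋} ζ(2k) ∑_{ω=0}^{c_η−2k} C(ω+d−1, ω)·(−2)^ω · ∑_{m ≠ 0} β(m; c_η−2k−ω; η)/m^{d+ω} + 2·∑_{η=1}^{h} ∑_{k=0}^{⌊d/2⌋} ζ(2k)·2^{−2k} ∑_{ω=0}^{c_η−1}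 C(ω+d−2k, ω)·(−2)^ω · ∑_{m ≠ 0} ((−1)^m + 1)·β(m; c_η−1−ω; η)/m^{d−2k+ω+1} − 2·∑_{η=1}^{h} ∑_{k=0}^{⌊(d+1)/2⌋} ζ(2k)·(1 − 2^{−2k}) ∑_{ω=0}^{c_η−1} C(ω+d−2k, ω)·(−2)^ω · ∑_{m ≠ 0} ((−1)^m − 1)·β(m; c_η−1−ω; η)/m^{d−2k+ω+1} = 0, where all series on the left-hand side converge absolutely. -/

import Mathlib

open Complex Finset

/-- `λ_j = (1 + (-1)^j)/2`. -/
noncomputable def lambdaPar (j : ℕ) : ℂ := (1 + (-1 : ℂ) ^ j) / 2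

/-- `φ(s) = (2^{1-s} - 1) ζ(s)` at nonnegative integer arguments, with the values
`φ(1) = -log 2` and `φ(0) = -1/2` coming from analytic continuation. -/
noncomputable def phiNat (n : ℕ) : ℂ :=
  if n = 1 then -Complex.log 2 else ((2 : ℂ) ^ (1 - (n : ℂ)) - 1) * riemannZeta n

/-- Generalized binomial coefficient `C(x, n)` for an integer `x` (possibly negative). -/
noncomputable def genBinom (x : ℤ) (n : ℕ) : ℚ :=
  (∏ i ∈ Finset.range n, ((x : ℚ) - i)) / (Nat.factorial n)

/-- The function `R_±(θ)` of Lemma 4.4: the choice `ε = i` gives `R_+` and `ε = -i`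
gives `R_-`. -/
noncomputable def Rpm (h : ℕ) (c : ℕ → ℕ) (α : ℤ → ℂ) (β : ℤ → ℕ → ℕ → ℝ) (ε : ℂ)
    (θ : ℝ) : ℂ :=
  (∑' m : {m : ℤ // m ≠ 0}, ε ^ (m : ℤ) * α m * Complex.exp (Complex.I * (m : ℤ) * θ / 2)) -
    2 * ∑ η ∈ Finset.Icc 1 h, ∑ k ∈ Finset.range (c η + 1),
      phiNat (c η - k) * lambdaPar (c η - k) *
        ∑ ξ ∈ Finset.range (k + 1),
          (∑' m : {m : ℤ // m ≠ 0}, ε ^ (m : ℤ) * ((β m (k - ξ) η : ℝ) : ℂ) *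
              Complex.exp (Complex.I * (m : ℤ) * θ / 2)) *
            (Complex.I * (θ : ℂ)) ^ ξ / (Nat.factorial ξ)

/-
Shifting `θ` by `±π` absorbs the factors `(±i)^m` of `R_±` into the common exponentials `e^{imx/2}`,
and differentiating `e^{imx/2} e^{itx} / (m + 2t)^{d+1}` in `x` lowers the exponent `d + 1` by one,
up to the factor `i/2`. Hence each of `R_+`, `R_-` starts a chain of primitives `G_d` with
`G_{d+1}' = (i/2) G_d`, and since `G_0` is constant, the generating series `∑ G_d(x) z^d` is
`e^{izx/2} ∑ G_d(0) z^d`.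

The two chains differ at `x = 0`, and at `x = 2π` against `x = -2π`, by jumps that become explicit
through `Φ(t) (e^{πit} - e^{-πit}) = -πit`, where `Φ(t) = ∑ φ(n) λ_n tⁿ`. This is a 2 × 2 linear
system for the two series `∑ G_d(0) z^d`. The same identity in `z`, together with
`2 Z(z) (e^{πiz} - e^{-πiz}) = -πiz (e^{πiz} + e^{-πiz})` for `Z(z) = ∑ ζ(2k) z^{2k}`, solves it for
their sum, whose coefficient at `z^d` gives the claim for `d`.
-/

open PowerSeries

instance : CharZero ℂ⟦X⟧ := algebraRat.charZero _

lemma rescale_C {R : Type*} [CommSemiring R] (a r : R) : rescale a (C r) = C r := by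
  ext (_ | n) <;> simp [coeff_rescale, coeff_C]

/-! ### Generating series of zeta values -/

/-- The formal exponential `e^{yt}`, a power series in `t`. -/
noncomputable def formalExp (y : ℂ) : ℂ⟦X⟧ := rescale y (PowerSeries.exp ℂ)

lemma coeff_formalExp (y : ℂ) (n : ℕ) : coeff n (formalExp y) = y ^ n / (n.factorial : ℂ) := by
  simp [formalExp, coeff_rescale, coeff_exp, div_eq_mul_inv]

lemma formalExp_zero : formalExp 0 = 1 := by
  simp [formalExp]

lemma formalExp_mul_formalExp (y z : ℂ) : formalExp y * formalExp z = formalExp (y + z) :=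
  exp_mul_exp_eq_exp_add y z

lemma rescale_formalExp (a y : ℂ) : rescale a (formalExp y) = formalExp (y * a) :=
  rescale_rescale _ _ _

lemma formalExp_injective : Function.Injective formalExp := fun y z h => by
  simpa [coeff_formalExp] using congrArg (coeff 1) h

/-- The generating series `∑ ζ(2k) t^{2k}` of the even zeta values, including `ζ(0) = -1/2`. -/
noncomputable def evenZetaSeries : ℂ⟦X⟧ := mk fun n => if Even n then riemannZeta n else 0

/-- The generating series `∑ φ(n) λ_n tⁿ` of the coefficients in `R_±`. -/
noncomputable def phiSeries : ℂ⟦X⟧ := mk fun n => phiNat n * lambdaPar n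

lemma rescale_evenZetaSeries (a : ℂ) :
    rescale a evenZetaSeries = mk fun n => if Even n then riemannZeta n * a ^ n else 0 := by
  ext n
  simp [evenZetaSeries, coeff_rescale, mul_comm]

lemma neg_four_mul_evenZetaSeries :
    -4 * evenZetaSeries =
      rescale (2 * Real.pi * I : ℂ) (bernoulliPowerSeries ℂ + bernoulli'PowerSeries ℂ) := by
  ext n
  rw [neg_mul, map_neg, ← map_ofNat C 4, coeff_C_mul, coeff_rescale, map_add]
  simp only [evenZetaSeries, bernoulliPowerSeries, bernoulli'PowerSeries, coeff_mk,
    bernoulli'_eq_bernoulli]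
  rcases Nat.even_or_odd' n with ⟨k, rfl | rfl⟩
  · rw [if_pos (even_two_mul k)]
    push_cast
    rw [riemannZeta_two_mul_nat', zpow_sub_one₀ two_ne_zero, mul_pow, mul_pow, pow_mul I, I_sq,
      zpow_mul, zpow_natCast, zpow_ofNat, ← pow_mul]
    simp only [even_two_mul, Even.neg_pow, one_pow, one_mul, eq_ratCast]
    ring
  · simp [pow_succ, neg_div]

lemma evenZetaSeries_mul_formalExp_sub :
    2 * evenZetaSeries * (formalExp (Real.pi * I) - formalExp (-(Real.pi * I))) =
      -(C (Real.pi * I) * X * (formalExp (Real.pi * I) + formalExp (-(Real.pi * I)))) := by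
  have bernoulli_sum : (bernoulliPowerSeries ℂ + bernoulli'PowerSeries ℂ) *
      (PowerSeries.exp ℂ - 1) = X * (PowerSeries.exp ℂ + 1) := by
    rw [add_mul, bernoulliPowerSeries_mul_exp_sub_one, bernoulli'PowerSeries_mul_exp_sub_one]
    ring
  have rescaled : -4 * evenZetaSeries * (formalExp (2 * Real.pi * I) - 1) =
      C (2 * Real.pi * I) * X * (formalExp (2 * Real.pi * I) + 1) := by
    simpa only [neg_four_mul_evenZetaSeries, map_mul, map_sub, map_add, map_one, rescale_X,
      formalExp] using congrArg (rescale (2 * Real.pi * I : ℂ)) bernoulli_sum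
  have hexp : formalExp (Real.pi * I) =
      formalExp (2 * Real.pi * I) * formalExp (-(Real.pi * I)) := by
    rw [formalExp_mul_formalExp]
    congr 1
    ring
  rw [hexp]
  simp only [map_mul, map_ofNat] at rescaled ⊢
  apply mul_left_cancel₀ (two_ne_zero (α := ℂ⟦X⟧))
  linear_combination -formalExp (-(Real.pi * I)) * rescaled

lemma phiSeries_eq : phiSeries = 2 * rescale (1 / 2) evenZetaSeries - evenZetaSeries := by
  ext n
  rw [map_sub, ← map_ofNat C 2, coeff_C_mul, rescale_evenZetaSeries]
  simp only [phiSeries, evenZetaSeries, coeff_mk]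
  rcases Nat.even_or_odd n with hn | hn
  · have hn1 : n ≠ 1 := by rintro rfl; simp at hn
    rw [phiNat, lambdaPar, if_neg hn1, if_pos hn, if_pos hn, hn.neg_one_pow,
      cpow_sub _ _ two_ne_zero, cpow_one, cpow_natCast]
    simp only [one_div, inv_pow]
    ring
  · simp [lambdaPar, hn.neg_one_pow, Nat.not_even_iff_odd.2 hn]

lemma phiSeries_mul_formalExp_sub :
    phiSeries * (formalExp (Real.pi * I) - formalExp (-(Real.pi * I))) =
      -(C (Real.pi * I) * X) := by
  set u := formalExp (Real.pi * I / 2) with hu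
  set v := formalExp (-(Real.pi * I / 2)) with hv
  have hu2 : formalExp (Real.pi * I) = u ^ 2 := by
    rw [sq, formalExp_mul_formalExp, add_halves]
  have hv2 : formalExp (-(Real.pi * I)) = v ^ 2 := by
    rw [sq, formalExp_mul_formalExp, ← neg_add, add_halves]
  have huv : u * v = 1 := by
    rw [formalExp_mul_formalExp, add_neg_cancel, formalExp_zero]
  have hZ := evenZetaSeries_mul_formalExp_sub
  have hhalf : 2 * rescale (1 / 2) evenZetaSeries * (u - v) =
      -(C (Real.pi * I) * (C (1 / 2) * X) * (u + v)) := by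
    have := congrArg (rescale (1 / 2 : ℂ)) hZ
    rw [hu, hv, ← neg_div]
    simpa only [map_mul (rescale (1 / 2 : ℂ)), map_ofNat, map_neg, map_add, map_sub, rescale_C,
      rescale_formalExp, rescale_X, mul_one_div] using this
  have hC : 2 * C (1 / 2 : ℂ) = 1 := by rw [← map_ofNat C 2, ← map_mul]; norm_num
  rw [hu2, hv2] at hZ ⊢
  rw [phiSeries_eq]
  apply mul_left_cancel₀ (two_ne_zero (α := ℂ⟦X⟧))
  linear_combination 2 * (u + v) * hhalf - hZ - C (Real.pi * I) * X * (u + v) ^ 2 * hC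
    - 2 * C (Real.pi * I) * X * huv

lemma formalExp_pi_mul_I_sub_ne_zero :
    formalExp (Real.pi * I) - formalExp (-(Real.pi * I)) ≠ 0 :=
  sub_ne_zero.2 (formalExp_injective.ne (by simp [eq_neg_iff_add_eq_zero, ← two_mul]))

lemma phiSeries_mul_formalExp_add :
    phiSeries * (formalExp (Real.pi * I) + formalExp (-(Real.pi * I))) = 2 * evenZetaSeries := by
  apply mul_right_cancel₀ formalExp_pi_mul_I_sub_ne_zero
  linear_combination (formalExp (Real.pi * I) + formalExp (-(Real.pi * I))) *
    phiSeries_mul_formalExp_sub - evenZetaSeries_mul_formalExp_sub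

lemma X_mul_add_eq_of_sub_eq {p p' s₀ s₁ : ℂ⟦X⟧}
    (h₀ : p - p' = -(2 * C (Real.pi * I) * s₀))
    (h₁ : p * formalExp (Real.pi * I) - p' * formalExp (-(Real.pi * I)) =
      2 * C (Real.pi * I) * s₁) :
    X * (p + p') = -(4 * (phiSeries * s₁ + evenZetaSeries * s₀)) := by
  apply mul_right_cancel₀ formalExp_pi_mul_I_sub_ne_zero
  linear_combination 2 * X * h₁
    - X * (formalExp (Real.pi * I) + formalExp (-(Real.pi * I))) * h₀
    + 4 * s₁ * phiSeries_mul_formalExp_sub + 2 * s₀ * evenZetaSeries_mul_formalExp_sub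

lemma coeff_mk_even_mul {R : Type*} [Semiring R] (f : ℕ → R) (Q : R⟦X⟧) (n : ℕ) :
    coeff n ((mk fun k => if Even k then f k else 0) * Q) =
      ∑ k ∈ range (n / 2 + 1), f (2 * k) * coeff (n - 2 * k) Q := by
  rw [coeff_mul, Finset.Nat.sum_antidiagonal_eq_sum_range_succ_mk]
  simp only [coeff_mk, ite_mul, zero_mul]
  rw [← sum_filter]
  have himage : {k ∈ range n.succ | Even k} = (range (n / 2 + 1)).image (2 * ·) := by
    ext k
    simp only [mem_filter, mem_image, mem_range, even_iff_exists_two_mul]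
    exact ⟨fun ⟨_, b, _⟩ => ⟨b, by omega, by omega⟩, fun ⟨b, _, _⟩ => ⟨by omega, b, by omega⟩⟩
  rw [himage, sum_image fun i _ j _ hij => by simpa using hij]

lemma coeff_succ_mk_even_mul_of_constantCoeff_eq_zero {R : Type*} [Semiring R] (f : ℕ → R)
    {Q : R⟦X⟧} (hQ : constantCoeff Q = 0) (n : ℕ) :
    coeff (n + 1) ((mk fun k => if Even k then f k else 0) * Q) =
      ∑ k ∈ range (n / 2 + 1), f (2 * k) * coeff (n + 1 - 2 * k) Q := by
  obtain ⟨Q', rfl⟩ := X_dvd_iff.2 hQ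
  rw [← mul_assoc, (commute_X _).eq, mul_assoc, coeff_succ_X_mul, coeff_mk_even_mul]
  refine sum_congr rfl fun k hk => ?_
  rw [show n + 1 - 2 * k = n - 2 * k + 1 by have := mem_range.1 hk; omega, coeff_succ_X_mul]

/-! ### Coefficientwise differentiation -/

/-- The coefficientwise derivative of a power series depending on a real parameter. -/
def HasCoeffDerivAt (f : ℝ → ℂ⟦X⟧) (f' : ℂ⟦X⟧) (x : ℝ) : Prop :=
  ∀ n, HasDerivAt (fun y => coeff n (f y)) (coeff n f') x

lemma hasCoeffDerivAt_const (f : ℂ⟦X⟧) (x : ℝ) : HasCoeffDerivAt (fun _ => f) 0 x := fun n => by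
  simpa using hasDerivAt_const x (coeff n f)

lemma HasCoeffDerivAt.mul {f g : ℝ → ℂ⟦X⟧} {f' g' : ℂ⟦X⟧} {x : ℝ}
    (hf : HasCoeffDerivAt f f' x) (hg : HasCoeffDerivAt g g' x) :
    HasCoeffDerivAt (fun y => f y * g y) (f' * g x + f x * g') x := fun n => by
  simp only [map_add, coeff_mul, ← sum_add_distrib]
  exact HasDerivAt.fun_sum fun i _ => (hf i.1).mul (hg i.2)

lemma HasCoeffDerivAt.const_mul {f : ℝ → ℂ⟦X⟧} {f' : ℂ⟦X⟧} {x : ℝ} (g : ℂ⟦X⟧)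
    (hf : HasCoeffDerivAt f f' x) : HasCoeffDerivAt (fun y => g * f y) (g * f') x := by
  simpa only [zero_mul, zero_add] using (hasCoeffDerivAt_const g x).mul hf

lemma hasCoeffDerivAt_formalExp {f : ℝ → ℂ} {f' : ℂ} {x : ℝ} (hf : HasDerivAt f f' x) :
    HasCoeffDerivAt (fun y => formalExp (f y)) (C f' * X * formalExp (f x)) x := by
  rintro (_ | n)
  · simpa [coeff_formalExp] using hasDerivAt_const x (1 : ℂ)
  · simp only [mul_assoc, coeff_C_mul, coeff_succ_X_mul, coeff_formalExp]
    refine ((hf.pow (n + 1)).div_const _).congr_deriv ?_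
    rw [Nat.factorial_succ, Nat.add_sub_cancel]
    have hn : (n.factorial : ℂ) ≠ 0 := mod_cast n.factorial_ne_zero
    have hn1 : (n + 1 : ℂ) ≠ 0 := mod_cast n.succ_ne_zero
    push_cast
    field_simp

lemma eq_coeff_mul_formalExp_of_hasDerivAt {G : ℕ → ℝ → ℂ} {a : ℂ} {s : Set ℝ}
    (hs : Convex ℝ s) (hs0 : 0 ∈ s) (hG : ∀ d x, HasDerivAt (G (d + 1)) (a * G d x) x)
    (hconst : ∃ K, ∀ x ∈ s, G 0 x = K) (d : ℕ) :
    ∀ x ∈ s, G d x = coeff d ((mk fun n => G n 0) * formalExp (a * x)) := by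
  set T : ℕ → ℝ → ℂ := fun d x => coeff d ((mk fun n => G n 0) * formalExp (a * x)) with hT
  have hT_deriv (d : ℕ) (x : ℝ) : HasDerivAt (T (d + 1)) (a * T d x) x := by
    have hlin : HasDerivAt (fun y : ℝ => a * (y : ℂ)) a x := by
      simpa using (Complex.ofRealCLM.hasDerivAt (x := x)).const_mul a
    refine ((hasCoeffDerivAt_formalExp hlin).const_mul (mk fun n => G n 0) (d + 1)).congr_deriv ?_
    rw [mul_left_comm, mul_assoc, coeff_C_mul, coeff_succ_X_mul]
  have hT_zero (d : ℕ) : T d 0 = G d 0 := by simp [hT, formalExp_zero]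
  induction d with
  | zero =>
    intro x hx
    obtain ⟨K, hK⟩ := hconst
    rw [coeff_mul]
    simp [coeff_formalExp, hK x hx, hK 0 hs0]
  | succ d ih =>
    intro x hx
    have hle := hs.norm_image_sub_le_of_norm_hasDerivWithin_le (C := 0)
      (fun y _ => ((hG d y).sub (hT_deriv d y)).hasDerivWithinAt)
      (fun y hy => by rw [ih y hy, sub_self, norm_zero]) hs0 hx
    simpa [hT_zero, sub_eq_zero] using hle

open scoped PowerSeries.WithPiTopology

lemma coeff_tsum {ι R : Type*} [Semiring R] [TopologicalSpace R] [T2Space R] {P : ι → R⟦X⟧}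
    (hP : Summable P) (n : ℕ) : coeff n (∑' i, P i) = ∑' i, coeff n (P i) :=
  ((WithPiTopology.hasSum_iff_hasSum_coeff R).1 hP.hasSum n).tsum_eq.symm

lemma summable_mul_of_bounded_coeff {ι : Type*} {P Q : ι → ℂ⟦X⟧} (hP : Summable P)
    (hQ : ∀ n, Memℓp (fun i => coeff n (Q i)) ⊤) : Summable fun i => P i * Q i := by
  rw [WithPiTopology.summable_iff_summable_coeff] at hP ⊢
  intro n
  simp only [coeff_mul]
  refine summable_sum fun p _ => ?_
  obtain ⟨B, hB⟩ := (hQ p.2).bddAbove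
  refine ((hP p.1).norm.mul_right B).of_norm_bounded fun i => ?_
  rw [norm_mul]
  exact mul_le_mul_of_nonneg_left (hB ⟨i, rfl⟩) (norm_nonneg _)

lemma summable_C_mul {ι : Type*} {w : ι → ℂ} {P : ι → ℂ⟦X⟧} (hw : Memℓp w ⊤)
    (hP : Summable P) : Summable fun i => C (w i) * P i := by
  simp only [mul_comm (C _)]
  refine summable_mul_of_bounded_coeff hP fun n => ?_
  simp only [coeff_C]
  split_ifs
  exacts [hw, zero_memℓp]

/-! ### Series over the nonzero integers -/

/-- The index set `ℤ ∖ {0}` of the series in `R_±`. -/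
abbrev NonzeroInt := {m : ℤ // m ≠ 0}

lemma NonzeroInt.cast_ne_zero (m : NonzeroInt) : ((m : ℤ) : ℂ) ≠ 0 := mod_cast m.2

lemma NonzeroInt.one_le_norm (m : NonzeroInt) : 1 ≤ ‖((m : ℤ) : ℂ)‖ := by
  rw [Complex.norm_intCast]
  exact_mod_cast Int.one_le_abs m.2

lemma genBinom_zero_right (x : ℤ) : genBinom x 0 = 1 := by simp [genBinom]

lemma genBinom_succ_succ (x : ℤ) (n : ℕ) :
    genBinom (x + 1) (n + 1) = genBinom x (n + 1) + genBinom x n := by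
  have hshift : ∀ i ∈ range n, ((x + 1 : ℤ) : ℚ) - ((i + 1 : ℕ) : ℚ) = x - i := fun i _ => by
    push_cast
    ring
  have hfact : (n.factorial : ℚ) ≠ 0 := mod_cast n.factorial_ne_zero
  have hsucc : (n + 1 : ℚ) ≠ 0 := mod_cast n.succ_ne_zero
  rw [genBinom, genBinom, genBinom, prod_range_succ', prod_range_succ, Nat.factorial_succ,
    prod_congr rfl hshift]
  push_cast
  field_simp
  ring

lemma genBinom_natCast_succ (n : ℕ) : genBinom n (n + 1) = 0 := by
  simp [genBinom, prod_range_succ]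

/-- The power series `1 / (m + 2t)`. Its powers encode the weights `C(ω+d-1, ω) (-2)^ω / m^{d+ω}`
of the sums over `ω`, and satisfy a first-order recursion matching `∂_x e^{imx/2}`. -/
noncomputable def resolventSeries (m : NonzeroInt) : ℂ⟦X⟧ := (C ((m : ℤ) : ℂ) + 2 * X)⁻¹

lemma constantCoeff_int_add_two_mul_X_ne_zero (m : NonzeroInt) :
    constantCoeff (C ((m : ℤ) : ℂ) + 2 * X : ℂ⟦X⟧) ≠ 0 := by
  simpa using m.2

lemma C_mul_resolventSeries_pow_succ (m : NonzeroInt) (d : ℕ) :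
    C ((m : ℤ) : ℂ) * resolventSeries m ^ (d + 1) =
      resolventSeries m ^ d - 2 * X * resolventSeries m ^ (d + 1) := by
  have hinv : resolventSeries m * (C ((m : ℤ) : ℂ) + 2 * X) = 1 :=
    PowerSeries.inv_mul_cancel _ (constantCoeff_int_add_two_mul_X_ne_zero m)
  linear_combination resolventSeries m ^ d * hinv

lemma coeff_resolventSeries_pow (m : NonzeroInt) (d n : ℕ) :
    coeff n (resolventSeries m ^ d) =
      genBinom ((n : ℤ) + d - 1) n * (-2) ^ n / ((m : ℤ) : ℂ) ^ (d + n) := by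
  have hm := m.cast_ne_zero
  induction d generalizing n with
  | zero =>
    rcases n with _ | n
    · simp [genBinom_zero_right]
    · simp [coeff_one, genBinom_natCast_succ]
  | succ d ihd =>
    have hrec (n : ℕ) := congrArg (coeff n) (C_mul_resolventSeries_pow_succ m d)
    simp only [map_sub, coeff_C_mul, mul_assoc, ← map_ofNat C 2] at hrec
    apply mul_left_cancel₀ hm
    induction n with
    | zero =>
      rw [hrec, coeff_zero_X_mul, ihd]
      simp only [genBinom_zero_right]
      field_simp
      simp [pow_succ]
    | succ n ihn =>
      rw [hrec, coeff_succ_X_mul, ihd, mul_left_cancel₀ hm ihn,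
        show ((n + 1 : ℕ) : ℤ) + (d + 1 : ℕ) - 1 = (n + d : ℤ) + 1 by push_cast; ring,
        genBinom_succ_succ,
        show ((n + 1 : ℕ) : ℤ) + d - 1 = n + d by push_cast; ring,
        show (n : ℤ) + (d + 1 : ℕ) - 1 = n + d by push_cast; ring]
      push_cast
      field_simp
      ring

lemma memℓp_top_coeff_resolventSeries_pow (d n : ℕ) :
    Memℓp (fun m => coeff n (resolventSeries m ^ d)) ⊤ :=
  memℓp_infty ⟨‖(genBinom ((n : ℤ) + d - 1) n * (-2) ^ n : ℂ)‖, by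
    rintro _ ⟨m, rfl⟩
    simp only [coeff_resolventSeries_pow, norm_div, norm_pow]
    exact div_le_self (norm_nonneg _) (one_le_pow₀ m.one_le_norm)⟩

/-- The series `∑_m w(m) P_m(t) / (m + 2t)^d`, with coefficientwise convergence. -/
noncomputable def resolventSum (w : NonzeroInt → ℂ) (P : NonzeroInt → ℂ⟦X⟧) (d : ℕ) : ℂ⟦X⟧ :=
  ∑' m, C (w m) * (P m * resolventSeries m ^ d)

section ResolventSum

variable {w v : NonzeroInt → ℂ} {P : NonzeroInt → ℂ⟦X⟧}

lemma summable_mul_resolventSeries_pow (hP : Summable P) (d : ℕ) :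
    Summable fun m => P m * resolventSeries m ^ d :=
  summable_mul_of_bounded_coeff hP (memℓp_top_coeff_resolventSeries_pow d)

lemma summable_C_mul_mul_resolventSeries_pow (hw : Memℓp w ⊤) (hP : Summable P) (d : ℕ) :
    Summable fun m => C (w m) * (P m * resolventSeries m ^ d) :=
  summable_C_mul hw (summable_mul_resolventSeries_pow hP d)

lemma resolventSum_add (hw : Memℓp w ⊤) (hv : Memℓp v ⊤) (hP : Summable P)
    (d : ℕ) : resolventSum (w + v) P d = resolventSum w P d + resolventSum v P d := by
  simp only [resolventSum, Pi.add_apply, map_add, add_mul]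
  exact (summable_C_mul_mul_resolventSeries_pow hw hP d).tsum_add
    (summable_C_mul_mul_resolventSeries_pow hv hP d)

lemma resolventSum_sub (hw : Memℓp w ⊤) (hv : Memℓp v ⊤) (hP : Summable P)
    (d : ℕ) : resolventSum (w - v) P d = resolventSum w P d - resolventSum v P d := by
  simp only [resolventSum, Pi.sub_apply, map_sub, sub_mul]
  exact (summable_C_mul_mul_resolventSeries_pow hw hP d).tsum_sub
    (summable_C_mul_mul_resolventSeries_pow hv hP d)

end ResolventSum

/-- The character `m ↦ e^{imx/2}` of `ℤ`, restricted to `ℤ ∖ {0}`. -/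
noncomputable def phase (x : ℝ) (m : NonzeroInt) : ℂ := Complex.exp (I * (m : ℤ) * x / 2)

/-- The character `m ↦ (-1)^m` of `ℤ`, restricted to `ℤ ∖ {0}`. -/
noncomputable def parity (m : NonzeroInt) : ℂ := (-1) ^ (m : ℤ)

lemma norm_exp_I_mul_int_mul_div_two (m : ℤ) (x : ℝ) :
    ‖Complex.exp (I * m * x / 2)‖ = 1 := by
  rw [show I * m * x / 2 = ((m * x / 2 : ℝ) : ℂ) * I by push_cast; ring,
    Complex.norm_exp_ofReal_mul_I]

lemma norm_zpow_mul_mul_exp {ε : ℂ} (hε : ‖ε‖ = 1) (m : ℤ) (z : ℂ) (θ : ℝ) :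
    ‖ε ^ m * z * Complex.exp (I * m * θ / 2)‖ = ‖z‖ := by
  rw [norm_mul, norm_mul, norm_zpow, hε, one_zpow, one_mul, norm_exp_I_mul_int_mul_div_two, mul_one]

lemma norm_phase (x : ℝ) (m : NonzeroInt) : ‖phase x m‖ = 1 :=
  norm_exp_I_mul_int_mul_div_two m x

lemma memℓp_top_phase (x : ℝ) : Memℓp (phase x) ⊤ :=
  memℓp_infty ⟨1, by rintro _ ⟨m, rfl⟩; exact (norm_phase x m).le⟩

lemma phase_zero : phase 0 = 1 := by
  ext m
  simp [phase]

lemma phase_two_pi : phase (2 * Real.pi) = parity := by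
  ext m
  rw [phase, parity, ← Complex.exp_pi_mul_I, ← Complex.exp_int_mul]
  congr 1
  push_cast
  ring

lemma phase_neg_two_pi : phase (-(2 * Real.pi)) = parity := by
  ext m
  rw [phase, parity, ← Complex.exp_neg_pi_mul_I, ← Complex.exp_int_mul]
  congr 1
  push_cast
  ring

lemma memℓp_top_one : Memℓp (1 : NonzeroInt → ℂ) ⊤ := phase_zero ▸ memℓp_top_phase 0

lemma memℓp_top_parity : Memℓp parity ⊤ := phase_two_pi ▸ memℓp_top_phase _

lemma I_zpow_mul_exp_sub_pi (x : ℝ) (m : NonzeroInt) :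
    I ^ (m : ℤ) * Complex.exp (I * (m : ℤ) * (x - Real.pi : ℝ) / 2) = phase x m := by
  nth_rw 1 [← Complex.exp_pi_div_two_mul_I]
  rw [← Complex.exp_int_mul, ← Complex.exp_add, phase]
  congr 1
  push_cast
  ring

lemma neg_I_zpow_mul_exp_sub_neg_pi (x : ℝ) (m : NonzeroInt) :
    (-I) ^ (m : ℤ) * Complex.exp (I * (m : ℤ) * (x - -Real.pi : ℝ) / 2) = phase x m := by
  nth_rw 1 [← Complex.exp_neg_pi_div_two_mul_I]
  rw [← Complex.exp_int_mul, ← Complex.exp_add, phase]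
  congr 1
  push_cast
  ring

lemma hasDerivAt_phase (m : NonzeroInt) (x : ℝ) :
    HasDerivAt (fun y => phase y m) (I / 2 * ((m : ℤ) * phase x m)) x := by
  have hlin : HasDerivAt (fun y : ℝ => I * (m : ℤ) * (y : ℂ) / 2) (I * (m : ℤ) / 2) x := by
    simpa using ((Complex.ofRealCLM.hasDerivAt (x := x)).const_mul (I * (m : ℤ))).div_const 2
  refine hlin.cexp.congr_deriv ?_
  rw [phase]
  ring

lemma hasDerivAt_tsum_phase_mul {f : NonzeroInt → ℂ} (hf : Summable f)
    (hf' : Summable fun m : NonzeroInt => ((m : ℤ) : ℂ) * f m) (x : ℝ) :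
    HasDerivAt (fun y => ∑' m, phase y m * f m)
      (I / 2 * ∑' m : NonzeroInt, phase x m * ((m : ℤ) * f m)) x := by
  rw [← tsum_mul_left]
  have hbound (m : NonzeroInt) (y : ℝ) :
      ‖I / 2 * (phase y m * ((m : ℤ) * f m))‖ ≤ ‖((m : ℤ) : ℂ) * f m‖ := by
    rw [norm_mul, norm_mul (phase y m), norm_phase, one_mul]
    exact mul_le_of_le_one_left (norm_nonneg _) (by norm_num)
  refine hasDerivAt_tsum hf'.norm (fun m y => ?_) hbound (y₀ := 0) ?_ x
  · refine ((hasDerivAt_phase m y).mul_const (f m)).congr_deriv ?_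
    ring
  · simpa [phase_zero] using hf

lemma hasCoeffDerivAt_tsum_phase_mul {P : NonzeroInt → ℂ⟦X⟧} (hP : Summable P)
    (hP' : Summable fun m : NonzeroInt => C ((m : ℤ) : ℂ) * P m) (x : ℝ) :
    HasCoeffDerivAt (fun y => ∑' m, C (phase y m) * P m)
      (C (I / 2) * ∑' m : NonzeroInt, C (phase x m) * (C ((m : ℤ) : ℂ) * P m)) x := by
  intro n
  have hcoeff := (WithPiTopology.summable_iff_summable_coeff ℂ).1 hP n
  have hcoeff' := (WithPiTopology.summable_iff_summable_coeff ℂ).1 hP' n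
  simp only [coeff_C_mul] at hcoeff'
  simp only [coeff_C_mul, coeff_tsum (summable_C_mul (memℓp_top_phase _) hP),
    coeff_tsum (summable_C_mul (memℓp_top_phase _) hP')]
  exact hasDerivAt_tsum_phase_mul hcoeff hcoeff' x

lemma hasCoeffDerivAt_resolventSum_phase {P : NonzeroInt → ℂ⟦X⟧} (hP : Summable P) (d : ℕ)
    (x : ℝ) :
    HasCoeffDerivAt (fun y => resolventSum (phase y) P (d + 1))
      (C (I / 2) *
        (resolventSum (phase x) P d - 2 * X * resolventSum (phase x) P (d + 1))) x := by
  have hrec (m : NonzeroInt) : C ((m : ℤ) : ℂ) * (P m * resolventSeries m ^ (d + 1)) =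
      P m * resolventSeries m ^ d - 2 * X * (P m * resolventSeries m ^ (d + 1)) := by
    linear_combination P m * C_mul_resolventSeries_pow_succ m d
  have hsum (e : ℕ) := summable_mul_resolventSeries_pow hP e
  have hsumC (e : ℕ) := summable_C_mul_mul_resolventSeries_pow (memℓp_top_phase x) hP e
  have hderiv := hasCoeffDerivAt_tsum_phase_mul (hsum (d + 1))
    (by simpa only [hrec] using (hsum d).sub ((hsum (d + 1)).mul_left (2 * X))) x
  simp only [hrec, mul_sub, mul_left_comm _ (2 * X : ℂ⟦X⟧)] at hderiv
  rwa [(hsumC d).tsum_sub ((hsumC (d + 1)).mul_left _), (hsumC (d + 1)).tsum_mul_left] at hderiv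

lemma summable_norm_mul {w f : NonzeroInt → ℂ} (hw : Memℓp w ⊤)
    (hf : Summable fun m => ‖f m‖) : Summable fun m => ‖w m * f m‖ := by
  obtain ⟨B, hB⟩ := hw.bddAbove
  refine (hf.mul_left B).of_nonneg_of_le (fun _ => norm_nonneg _) fun m => ?_
  rw [norm_mul]
  exact mul_le_mul_of_nonneg_right (hB ⟨m, rfl⟩) (norm_nonneg _)

lemma summable_norm_div_zpow {f : NonzeroInt → ℂ} (hf : Summable fun m => ‖f m‖) {e : ℤ}
    (he : 0 ≤ e) : Summable fun m : NonzeroInt => ‖f m / ((m : ℤ) : ℂ) ^ e‖ := by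
  refine hf.of_nonneg_of_le (fun _ => norm_nonneg _) fun m => ?_
  rw [norm_div, norm_zpow]
  exact div_le_self (norm_nonneg _) (one_le_zpow₀ m.one_le_norm he)

/-! ### The chains of primitives of `R_±` -/

section Primitives

variable {κ : Type*} (H : Finset κ) (c : κ → ℕ) (α : ℤ → ℂ) (P : κ → NonzeroInt → ℂ⟦X⟧)

/-- The functions `G_d(x)` with `G_{d+1}' = (i/2) G_d`, where `G_0(x)` is `R_±(x - s)`,
`s = ±π`, once the inner sums over `k` and `ξ` are read as coefficients of a product of power
series. -/
noncomputable def iteratedPrimitive (s : ℝ) (d : ℕ) (x : ℝ) : ℂ :=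
  ∑' m : NonzeroInt, phase x m * (α m / ((m : ℤ) : ℂ) ^ d) -
    2 * ∑ η ∈ H, coeff (c η)
      (phiSeries * (formalExp (I * (x - s)) * resolventSum (phase x) (P η) d))

/-- The generating series in `d` of the values at `0` of the iterated primitives. -/
noncomputable def primitiveSeries (s : ℝ) : ℂ⟦X⟧ :=
  mk fun d => iteratedPrimitive H c α P s d 0

/-- The generating series in `d` of the jumps, up to the factor `2πi`, between the two families of
iterated primitives. Multiplication by `X` selects the coefficient of index `c η - 1`. -/
noncomputable def jumpSeries (w : NonzeroInt → ℂ) : ℂ⟦X⟧ :=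
  mk fun d => ∑ η ∈ H, coeff (c η) (X * resolventSum w (P η) d)

variable {H P} in
lemma jumpSeries_add {w v : NonzeroInt → ℂ} (hw : Memℓp w ⊤) (hv : Memℓp v ⊤)
    (hP : ∀ η ∈ H, Summable (P η)) :
    jumpSeries H c P (w + v) = jumpSeries H c P w + jumpSeries H c P v := by
  ext d
  simp only [jumpSeries, map_add, coeff_mk, ← sum_add_distrib]
  refine sum_congr rfl fun η hη => ?_
  rw [resolventSum_add hw hv (hP η hη), mul_add, map_add]

variable {H P} in
lemma jumpSeries_sub {w v : NonzeroInt → ℂ} (hw : Memℓp w ⊤) (hv : Memℓp v ⊤)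
    (hP : ∀ η ∈ H, Summable (P η)) :
    jumpSeries H c P (w - v) = jumpSeries H c P w - jumpSeries H c P v := by
  ext d
  simp only [jumpSeries, map_sub, coeff_mk, ← sum_sub_distrib]
  refine sum_congr rfl fun η hη => ?_
  rw [resolventSum_sub hw hv (hP η hη), mul_sub, map_sub]

variable {H P α} in
lemma hasDerivAt_iteratedPrimitive (hα : Summable fun m : NonzeroInt => ‖α m‖)
    (hP : ∀ η ∈ H, Summable (P η)) (s : ℝ) (d : ℕ) (x : ℝ) :
    HasDerivAt (iteratedPrimitive H c α P s (d + 1))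
      (I / 2 * iteratedPrimitive H c α P s d x) x := by
  have hsum (e : ℕ) : Summable fun m : NonzeroInt => α m / ((m : ℤ) : ℂ) ^ e :=
    (summable_norm_div_zpow hα e.cast_nonneg).of_norm
  have hpow (m : NonzeroInt) :
      ((m : ℤ) : ℂ) * (α m / ((m : ℤ) : ℂ) ^ (d + 1)) = α m / ((m : ℤ) : ℂ) ^ d := by
    rw [pow_succ', ← div_div, mul_div_assoc', mul_div_cancel₀ _ m.cast_ne_zero]
  have hα' := hasDerivAt_tsum_phase_mul (hsum (d + 1)) (by simpa only [hpow] using hsum d) x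
  simp only [hpow] at hα'
  have hlin : HasDerivAt (fun y : ℝ => I * ((y : ℂ) - s)) I x := by
    simpa using ((Complex.ofRealCLM.hasDerivAt (x := x)).sub_const (s : ℂ)).const_mul I
  have hP' : ∀ η ∈ H, HasCoeffDerivAt
      (fun y => phiSeries * (formalExp (I * (y - s)) * resolventSum (phase y) (P η) (d + 1)))
      (C (I / 2) * (phiSeries * (formalExp (I * (x - s)) * resolventSum (phase x) (P η) d)))
      x := fun η hη => by
    have hI : (C I : ℂ⟦X⟧) = 2 * C (I / 2) := by
      rw [← map_ofNat C 2, ← map_mul, mul_div_cancel₀ _ two_ne_zero]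
    convert ((hasCoeffDerivAt_formalExp hlin).mul
      (hasCoeffDerivAt_resolventSum_phase (hP η hη) d x)).const_mul phiSeries using 1
    rw [hI]
    ring
  refine (hα'.sub ((HasDerivAt.fun_sum fun η hη => hP' η hη (c η)).const_mul 2)).congr_deriv ?_
  simp only [coeff_C_mul, ← mul_sum, iteratedPrimitive]
  ring

lemma iteratedPrimitive_sub_of_phase_eq {x y s t : ℝ} (hxy : phase x = phase y)
    (hx : x - s = Real.pi) (hy : y - t = -Real.pi) (d : ℕ) :
    iteratedPrimitive H c α P s d x - iteratedPrimitive H c α P t d y =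
      2 * (Real.pi * I) * coeff d (jumpSeries H c P (phase x)) := by
  have hterm (η : κ) :
      coeff (c η) (phiSeries * (formalExp (I * (y - t)) * resolventSum (phase x) (P η) d)) -
        coeff (c η) (phiSeries * (formalExp (I * (x - s)) * resolventSum (phase x) (P η) d)) =
      Real.pi * I * coeff (c η) (X * resolventSum (phase x) (P η) d) := by
    rw [← ofReal_sub, ← ofReal_sub, hx, hy, ofReal_neg, mul_neg, mul_comm I, ← map_sub,
      ← coeff_C_mul]
    congr 1
    linear_combination -resolventSum (phase x) (P η) d * phiSeries_mul_formalExp_sub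
  simp only [iteratedPrimitive, ← hxy, jumpSeries, coeff_mk]
  have hsum := sum_congr rfl fun η (_ : η ∈ H) => hterm η
  rw [sum_sub_distrib, ← mul_sum] at hsum
  linear_combination 2 * hsum

lemma primitiveSeries_sub :
    primitiveSeries H c α P Real.pi - primitiveSeries H c α P (-Real.pi) =
      -(2 * C (Real.pi * I) * jumpSeries H c P 1) := by
  ext d
  have hjump := iteratedPrimitive_sub_of_phase_eq H c α P (x := 0) (y := 0) (s := -Real.pi)
    (t := Real.pi) rfl (by ring) (by ring) d
  rw [phase_zero] at hjump
  rw [map_neg, mul_assoc, ← map_ofNat C 2, coeff_C_mul, coeff_C_mul, map_sub, primitiveSeries,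
    primitiveSeries, coeff_mk, coeff_mk, ← neg_sub, hjump, mul_assoc]

lemma coeff_primitiveSeries_add (d : ℕ) :
    coeff d (primitiveSeries H c α P Real.pi + primitiveSeries H c α P (-Real.pi)) =
      2 * ∑' m : NonzeroInt, α m / ((m : ℤ) : ℂ) ^ d -
        4 * ∑ η ∈ H, coeff (c η) (evenZetaSeries * resolventSum 1 (P η) d) := by
  have hterm (η : κ) :
      coeff (c η) (phiSeries * (formalExp (-(Real.pi * I)) * resolventSum 1 (P η) d)) +
        coeff (c η) (phiSeries * (formalExp (Real.pi * I) * resolventSum 1 (P η) d)) =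
      2 * coeff (c η) (evenZetaSeries * resolventSum 1 (P η) d) := by
    rw [← map_add, ← coeff_C_mul, map_ofNat]
    congr 1
    linear_combination resolventSum 1 (P η) d * phiSeries_mul_formalExp_add
  have hsum := sum_congr rfl fun η (_ : η ∈ H) => hterm η
  rw [sum_add_distrib, ← mul_sum] at hsum
  simp only [primitiveSeries, map_add, coeff_mk, iteratedPrimitive, phase_zero, Pi.one_apply,
    one_mul, ofReal_zero, ofReal_neg, zero_sub, neg_neg, mul_comm I, neg_mul]
  linear_combination -2 * hsum

variable {H α P}

lemma primitiveSeries_mul_formalExp_sub (hα : Summable fun m : NonzeroInt => ‖α m‖)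
    (hP : ∀ η ∈ H, Summable (P η))
    (hpos : ∃ K, ∀ x ∈ Set.Icc 0 (2 * Real.pi), iteratedPrimitive H c α P Real.pi 0 x = K)
    (hneg : ∃ K, ∀ x ∈ Set.Icc (-(2 * Real.pi)) 0,
      iteratedPrimitive H c α P (-Real.pi) 0 x = K) :
    primitiveSeries H c α P Real.pi * formalExp (Real.pi * I) -
        primitiveSeries H c α P (-Real.pi) * formalExp (-(Real.pi * I)) =
      2 * C (Real.pi * I) * jumpSeries H c P parity := by
  have hpi := Real.pi_pos
  ext d
  have hright := eq_coeff_mul_formalExp_of_hasDerivAt (convex_Icc 0 (2 * Real.pi))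
    ⟨le_rfl, by positivity⟩ (hasDerivAt_iteratedPrimitive c hα hP Real.pi) hpos d
    (2 * Real.pi) ⟨by positivity, le_rfl⟩
  have hleft := eq_coeff_mul_formalExp_of_hasDerivAt (convex_Icc (-(2 * Real.pi)) 0)
    ⟨by linarith, le_rfl⟩ (hasDerivAt_iteratedPrimitive c hα hP (-Real.pi)) hneg d
    (-(2 * Real.pi)) ⟨le_rfl, by linarith⟩
  have hjump := iteratedPrimitive_sub_of_phase_eq H c α P (s := Real.pi) (t := -Real.pi)
    (phase_two_pi.trans phase_neg_two_pi.symm) (by ring) (by ring) d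
  have hexp_right : I / 2 * (2 * Real.pi : ℝ) = Real.pi * I := by push_cast; ring
  have hexp_left : I / 2 * (-(2 * Real.pi) : ℝ) = -(Real.pi * I) := by push_cast; ring
  rw [hright, hleft, hexp_right, hexp_left, phase_two_pi] at hjump
  rw [mul_assoc 2, ← map_ofNat C 2, coeff_C_mul, coeff_C_mul, ← mul_assoc]
  exact hjump

lemma constantCoeff_jumpSeries_add_one (hP : ∀ η ∈ H, Summable (P η))
    (hparity : primitiveSeries H c α P Real.pi * formalExp (Real.pi * I) -
        primitiveSeries H c α P (-Real.pi) * formalExp (-(Real.pi * I)) =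
      2 * C (Real.pi * I) * jumpSeries H c P parity) :
    constantCoeff (jumpSeries H c P (parity + 1)) = 0 := by
  have hzero (y : ℂ) : constantCoeff (formalExp y) = 1 := by
    rw [← coeff_zero_eq_constantCoeff_apply, coeff_formalExp]
    simp
  have h₀ := congrArg constantCoeff (primitiveSeries_sub H c α P)
  have h₁ := congrArg constantCoeff hparity
  simp only [map_sub, map_neg, map_mul, hzero, mul_one, map_ofNat, constantCoeff_C] at h₀ h₁
  rw [jumpSeries_add c memℓp_top_parity memℓp_top_one hP, map_add]
  apply mul_left_cancel₀ (show (2 * (Real.pi * I) : ℂ) ≠ 0 by simp [Real.pi_ne_zero])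
  linear_combination h₀ - h₁

lemma tsum_div_pow_sub_add_coeff_sub_coeff_eq_zero (hP : ∀ η ∈ H, Summable (P η))
    (hparity : primitiveSeries H c α P Real.pi * formalExp (Real.pi * I) -
        primitiveSeries H c α P (-Real.pi) * formalExp (-(Real.pi * I)) =
      2 * C (Real.pi * I) * jumpSeries H c P parity) (d : ℕ) :
    ∑' m : NonzeroInt, α m / ((m : ℤ) : ℂ) ^ d -
        2 * ∑ η ∈ H, coeff (c η) (evenZetaSeries * resolventSum 1 (P η) d) +
        2 * coeff (d + 1) (rescale (1 / 2) evenZetaSeries * jumpSeries H c P (parity + 1)) -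
        2 * coeff (d + 1)
          ((evenZetaSeries - rescale (1 / 2) evenZetaSeries) * jumpSeries H c P (parity - 1)) =
      0 := by
  have hseries := X_mul_add_eq_of_sub_eq (primitiveSeries_sub H c α P) hparity
  have hsplit : phiSeries * jumpSeries H c P parity + evenZetaSeries * jumpSeries H c P 1 =
      rescale (1 / 2) evenZetaSeries * jumpSeries H c P (parity + 1) -
        (evenZetaSeries - rescale (1 / 2) evenZetaSeries) * jumpSeries H c P (parity - 1) := by
    rw [jumpSeries_add c memℓp_top_parity memℓp_top_one hP,
      jumpSeries_sub c memℓp_top_parity memℓp_top_one hP, phiSeries_eq]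
    ring
  have hcoeff := congrArg (coeff (d + 1)) hseries
  rw [coeff_succ_X_mul, coeff_primitiveSeries_add, hsplit, map_neg, ← map_ofNat C 4, coeff_C_mul,
    map_sub] at hcoeff
  linear_combination hcoeff / 2

end Primitives

/-! ### Coefficient extraction -/

section BetaSeries

variable {κ : Type*} {c : κ → ℕ} {β : ℤ → ℕ → κ → ℂ} {η : κ}

/-- The polynomials `∑_{j ≤ c_η} β(m; j; η) tʲ`. The coefficients beyond `c_η` never enter `R_±` and
are dropped because nothing is known about their summability in `m`. -/
noncomputable def betaSeries (c : κ → ℕ) (β : ℤ → ℕ → κ → ℂ) (η : κ) (m : NonzeroInt) : ℂ⟦X⟧ :=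
  (trunc (c η + 1) (mk fun j => β m j η) : ℂ⟦X⟧)

lemma coeff_betaSeries_of_le {j : ℕ} (hj : j ≤ c η) (m : NonzeroInt) :
    coeff j (betaSeries c β η m) = β m j η := by
  rw [betaSeries, Polynomial.coeff_coe, coeff_trunc, if_pos (Nat.lt_succ_of_le hj), coeff_mk]

lemma summable_betaSeries (hβ : ∀ j ≤ c η, Summable fun m : NonzeroInt => ‖β m j η‖) :
    Summable (betaSeries c β η) := by
  rw [WithPiTopology.summable_iff_summable_coeff]
  intro j
  by_cases hj : j ≤ c η
  · simpa only [coeff_betaSeries_of_le hj] using (hβ j hj).of_norm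
  · simp [betaSeries, Polynomial.coeff_coe, coeff_trunc, hj]

lemma coeff_resolventSum_betaSeries
    (hβ : ∀ j ≤ c η, Summable fun m : NonzeroInt => ‖β m j η‖) {w : NonzeroInt → ℂ}
    (hw : Memℓp w ⊤) (d : ℕ) {n : ℕ} (hn : n ≤ c η) :
    coeff n (resolventSum w (betaSeries c β η) d) =
      ∑ ω ∈ range (n + 1), (genBinom ((ω : ℤ) + d - 1) ω : ℂ) * (-2) ^ ω *
        ∑' m : NonzeroInt, w m * β m (n - ω) η / ((m : ℤ) : ℂ) ^ ((d : ℤ) + ω) := by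
  have hsummable : ∀ ω ∈ range (n + 1), Summable fun m : NonzeroInt =>
      w m * β m (n - ω) η / ((m : ℤ) : ℂ) ^ ((d : ℤ) + ω) := fun ω _ =>
    (summable_norm_div_zpow (summable_norm_mul hw (hβ (n - ω) (by omega))) (by omega)).of_norm
  rw [resolventSum,
    coeff_tsum (summable_C_mul_mul_resolventSeries_pow hw (summable_betaSeries hβ) d)]
  simp only [← tsum_mul_left]
  rw [← Summable.tsum_finsetSum fun ω hω => (hsummable ω hω).mul_left _]
  refine tsum_congr fun m => ?_
  rw [coeff_C_mul, mul_comm (betaSeries c β η m), coeff_mul,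
    Finset.Nat.sum_antidiagonal_eq_sum_range_succ_mk, mul_sum]
  refine sum_congr rfl fun ω _ => ?_
  rw [coeff_resolventSeries_pow, coeff_betaSeries_of_le (by omega), zpow_add₀ m.cast_ne_zero,
    zpow_natCast, zpow_natCast, ← pow_add]
  ring

end BetaSeries

section Rpm

variable {κ : Type*} {H : Finset κ} {c : κ → ℕ} {α : ℤ → ℂ} {β : ℤ → ℕ → κ → ℂ}

/-- The function `R_±(θ)` for an arbitrary finite index set of `η` and complex `β`; as in `Rpm`,
the sign is encoded by `ε = ±i`. -/
noncomputable def RpmFinset (H : Finset κ) (c : κ → ℕ) (α : ℤ → ℂ) (β : ℤ → ℕ → κ → ℂ) (ε : ℂ)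
    (θ : ℝ) : ℂ :=
  (∑' m : NonzeroInt, ε ^ (m : ℤ) * α m * Complex.exp (I * (m : ℤ) * θ / 2)) -
    2 * ∑ η ∈ H, ∑ k ∈ range (c η + 1), phiNat (c η - k) * lambdaPar (c η - k) *
      ∑ ξ ∈ range (k + 1),
        (∑' m : NonzeroInt, ε ^ (m : ℤ) * β m (k - ξ) η *
          Complex.exp (I * (m : ℤ) * θ / 2)) * (I * (θ : ℂ)) ^ ξ / (Nat.factorial ξ)

lemma iteratedPrimitive_zero_eq_RpmFinset
    (hβ : ∀ η ∈ H, ∀ j ≤ c η, Summable fun m : NonzeroInt => ‖β m j η‖) {ε : ℂ} {s x : ℝ}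
    (hphase : ∀ m : NonzeroInt,
      ε ^ (m : ℤ) * Complex.exp (I * (m : ℤ) * (x - s : ℝ) / 2) = phase x m) :
    iteratedPrimitive H c α (betaSeries c β) s 0 x = RpmFinset H c α β ε (x - s) := by
  have hmul (f : NonzeroInt → ℂ) : ∑' m : NonzeroInt,
      ε ^ (m : ℤ) * f m * Complex.exp (I * (m : ℤ) * (x - s : ℝ) / 2) =
        ∑' m, phase x m * f m :=
    tsum_congr fun m => by rw [← hphase m]; ring
  have hcoeff : ∀ η ∈ H, ∀ j ≤ c η,
      coeff j (resolventSum (phase x) (betaSeries c β η) 0) =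
        ∑' m : NonzeroInt, phase x m * β m j η := fun η hη j hj => by
    rw [resolventSum, coeff_tsum (summable_C_mul_mul_resolventSeries_pow (memℓp_top_phase x)
      (summable_betaSeries (hβ η hη)) 0)]
    simp only [pow_zero, mul_one, coeff_C_mul, coeff_betaSeries_of_le hj]
  rw [iteratedPrimitive, RpmFinset, hmul fun m => α m]
  simp only [pow_zero, div_one]
  congr 2
  refine sum_congr rfl fun η hη => ?_
  rw [mul_comm, coeff_mul, Finset.Nat.sum_antidiagonal_eq_sum_range_succ_mk]
  refine sum_congr rfl fun k hk => ?_
  rw [coeff_mul, Finset.Nat.sum_antidiagonal_eq_sum_range_succ_mk, mul_comm, phiSeries, coeff_mk]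
  refine congrArg _ (sum_congr rfl fun ξ _ => ?_)
  rw [hcoeff η hη _ (by have := mem_range.1 hk; omega), coeff_formalExp,
    hmul fun m => β m (k - ξ) η]
  push_cast
  ring

lemma coeff_jumpSeries_betaSeries
    (hβ : ∀ η ∈ H, ∀ j ≤ c η, Summable fun m : NonzeroInt => ‖β m j η‖) {w : NonzeroInt → ℂ}
    (hw : Memℓp w ⊤) {d k : ℕ} (hk : 2 * k ≤ d + 1) :
    coeff (d + 1 - 2 * k) (jumpSeries H c (betaSeries c β) w) =
      ∑ η ∈ H, ∑ ω ∈ range (c η), (genBinom ((ω : ℤ) + d - 2 * k) ω : ℂ) * (-2) ^ ω *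
        ∑' m : NonzeroInt,
          w m * β m (c η - 1 - ω) η / ((m : ℤ) : ℂ) ^ ((d : ℤ) - 2 * k + ω + 1) := by
  rw [jumpSeries, coeff_mk]
  refine sum_congr rfl fun η hη => ?_
  rcases hc : c η with _ | n
  · rw [coeff_zero_X_mul, range_zero, sum_empty]
  · rw [coeff_succ_X_mul, ← hc, coeff_resolventSum_betaSeries (hβ η hη) hw _ (by omega)]
    refine sum_congr (by rw [hc]) fun ω _ => ?_
    rw [show (ω : ℤ) + (d + 1 - 2 * k : ℕ) - 1 = ω + d - 2 * k by omega,
      show ((d + 1 - 2 * k : ℕ) : ℤ) + ω = d - 2 * k + ω + 1 by omega, hc, Nat.add_sub_cancel]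

lemma coeff_evenZetaSeries_mul_resolventSum_betaSeries
    (hβ : ∀ η ∈ H, ∀ j ≤ c η, Summable fun m : NonzeroInt => ‖β m j η‖) (d : ℕ) {η : κ}
    (hη : η ∈ H) :
    coeff (c η) (evenZetaSeries * resolventSum 1 (betaSeries c β η) d) =
      ∑ k ∈ range (c η / 2 + 1), riemannZeta (2 * k) *
        ∑ ω ∈ range (c η - 2 * k + 1), (genBinom ((ω : ℤ) + d - 1) ω : ℂ) * (-2) ^ ω *
          ∑' m : NonzeroInt, β m (c η - 2 * k - ω) η / ((m : ℤ) : ℂ) ^ ((d : ℤ) + ω) := by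
  rw [evenZetaSeries, coeff_mk_even_mul]
  refine sum_congr rfl fun k _ => ?_
  rw [coeff_resolventSum_betaSeries (hβ η hη) memℓp_top_one d (Nat.sub_le _ _)]
  simp only [Nat.cast_mul, Nat.cast_ofNat, Pi.one_apply, one_mul]

lemma coeff_rescale_evenZetaSeries_mul_jumpSeries_betaSeries
    (hβ : ∀ η ∈ H, ∀ j ≤ c η, Summable fun m : NonzeroInt => ‖β m j η‖) {w : NonzeroInt → ℂ}
    (hw : Memℓp w ⊤)
    (hzero : constantCoeff (jumpSeries H c (betaSeries c β) w) = 0) (d : ℕ) :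
    coeff (d + 1) (rescale (1 / 2) evenZetaSeries * jumpSeries H c (betaSeries c β) w) =
      ∑ η ∈ H, ∑ k ∈ range (d / 2 + 1), riemannZeta (2 * k) * ((2 : ℂ) ^ (2 * k))⁻¹ *
        ∑ ω ∈ range (c η), (genBinom ((ω : ℤ) + d - 2 * k) ω : ℂ) * (-2) ^ ω *
          ∑' m : NonzeroInt,
            w m * β m (c η - 1 - ω) η / ((m : ℤ) : ℂ) ^ ((d : ℤ) - 2 * k + ω + 1) := by
  rw [rescale_evenZetaSeries, coeff_succ_mk_even_mul_of_constantCoeff_eq_zero _ hzero, sum_comm]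
  refine sum_congr rfl fun k hk => ?_
  rw [coeff_jumpSeries_betaSeries hβ hw (by have := mem_range.1 hk; omega), mul_sum]
  simp only [Nat.cast_mul, Nat.cast_ofNat, one_div, inv_pow]

lemma coeff_evenZetaSeries_sub_rescale_mul_jumpSeries_betaSeries
    (hβ : ∀ η ∈ H, ∀ j ≤ c η, Summable fun m : NonzeroInt => ‖β m j η‖) {w : NonzeroInt → ℂ}
    (hw : Memℓp w ⊤) (d : ℕ) :
    coeff (d + 1) ((evenZetaSeries - rescale (1 / 2) evenZetaSeries) *
        jumpSeries H c (betaSeries c β) w) =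
      ∑ η ∈ H, ∑ k ∈ range ((d + 1) / 2 + 1), riemannZeta (2 * k) * (1 - ((2 : ℂ) ^ (2 * k))⁻¹) *
        ∑ ω ∈ range (c η), (genBinom ((ω : ℤ) + d - 2 * k) ω : ℂ) * (-2) ^ ω *
          ∑' m : NonzeroInt,
            w m * β m (c η - 1 - ω) η / ((m : ℤ) : ℂ) ^ ((d : ℤ) - 2 * k + ω + 1) := by
  have hsub : evenZetaSeries - rescale (1 / 2) evenZetaSeries =
      mk fun n => if Even n then riemannZeta n * (1 - ((2 : ℂ) ^ n)⁻¹) else 0 := by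
    ext n
    rw [rescale_evenZetaSeries, map_sub, evenZetaSeries, coeff_mk, coeff_mk, coeff_mk]
    split_ifs
    · rw [one_div, inv_pow]
      ring
    · rw [sub_zero]
  rw [hsub, coeff_mk_even_mul, sum_comm]
  refine sum_congr rfl fun k hk => ?_
  rw [coeff_jumpSeries_betaSeries hβ hw (by have := mem_range.1 hk; omega), mul_sum]
  simp only [Nat.cast_mul, Nat.cast_ofNat]

lemma primitiveSeries_betaSeries_mul_formalExp_sub
    (hα : Summable fun m : NonzeroInt => ‖α m‖)
    (hβ : ∀ η ∈ H, ∀ j ≤ c η, Summable fun m : NonzeroInt => ‖β m j η‖)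
    (hconst : ∀ ε ∈ ({I, -I} : Set ℂ), ∃ K, ∀ θ ∈ Set.Icc (-Real.pi) Real.pi,
      RpmFinset H c α β ε θ = K) :
    primitiveSeries H c α (betaSeries c β) Real.pi * formalExp (Real.pi * I) -
        primitiveSeries H c α (betaSeries c β) (-Real.pi) * formalExp (-(Real.pi * I)) =
      2 * C (Real.pi * I) * jumpSeries H c (betaSeries c β) parity := by
  obtain ⟨K, hK⟩ := hconst I (by simp)
  obtain ⟨K', hK'⟩ := hconst (-I) (by simp)
  refine primitiveSeries_mul_formalExp_sub c hα (fun η hη => summable_betaSeries (hβ η hη))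
    ⟨K, fun x hx => ?_⟩ ⟨K', fun x hx => ?_⟩
  · rw [iteratedPrimitive_zero_eq_RpmFinset hβ (I_zpow_mul_exp_sub_pi x)]
    exact hK _ ⟨by linarith [hx.1], by linarith [hx.2]⟩
  · rw [iteratedPrimitive_zero_eq_RpmFinset hβ (neg_I_zpow_mul_exp_sub_neg_pi x)]
    exact hK' _ ⟨by linarith [hx.1], by linarith [hx.2]⟩

end Rpm

theorem lemma44_general {κ : Type*} (H : Finset κ) (α : ℤ → ℂ) (β : ℤ → ℕ → κ → ℂ) (c : κ → ℕ)
    (hα : Summable fun m : {m : ℤ // m ≠ 0} => ‖α m‖)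
    (hβ : ∀ η ∈ H, ∀ j ≤ c η, Summable fun m : {m : ℤ // m ≠ 0} => ‖β m j η‖)
    (hconst : ∀ ε ∈ ({I, -I} : Set ℂ), ∃ K, ∀ θ ∈ Set.Icc (-Real.pi) Real.pi,
      RpmFinset H c α β ε θ = K) (d : ℕ) :
    (Summable fun m : {m : ℤ // m ≠ 0} => ‖α m / ((m : ℤ) : ℂ) ^ (d : ℤ)‖) ∧
    (∀ η ∈ H, ∀ k ∈ range (c η / 2 + 1), ∀ ω ∈ range (c η - 2 * k + 1),
      Summable fun m : {m : ℤ // m ≠ 0} =>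
        ‖β m (c η - 2 * k - ω) η / ((m : ℤ) : ℂ) ^ ((d : ℤ) + ω)‖) ∧
    (∀ η ∈ H, ∀ k ∈ range (d / 2 + 1), ∀ ω ∈ range (c η),
      Summable fun m : {m : ℤ // m ≠ 0} =>
        ‖(((-1 : ℂ) ^ (m : ℤ) + 1) * β m (c η - 1 - ω) η) /
          ((m : ℤ) : ℂ) ^ ((d : ℤ) - 2 * k + ω + 1)‖) ∧
    (∀ η ∈ H, ∀ k ∈ range ((d + 1) / 2 + 1), ∀ ω ∈ range (c η),
      Summable fun m : {m : ℤ // m ≠ 0} =>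
        ‖(((-1 : ℂ) ^ (m : ℤ) - 1) * β m (c η - 1 - ω) η) /
          ((m : ℤ) : ℂ) ^ ((d : ℤ) - 2 * k + ω + 1)‖) ∧
    (∑' m : {m : ℤ // m ≠ 0}, α m / ((m : ℤ) : ℂ) ^ (d : ℤ)) -
      2 * (∑ η ∈ H, ∑ k ∈ range (c η / 2 + 1), riemannZeta (2 * k) *
        ∑ ω ∈ range (c η - 2 * k + 1), (genBinom ((ω : ℤ) + d - 1) ω : ℂ) * (-2 : ℂ) ^ ω *
          ∑' m : {m : ℤ // m ≠ 0},
            β m (c η - 2 * k - ω) η / ((m : ℤ) : ℂ) ^ ((d : ℤ) + ω)) +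
      2 * (∑ η ∈ H, ∑ k ∈ range (d / 2 + 1), riemannZeta (2 * k) * ((2 : ℂ) ^ (2 * k))⁻¹ *
        ∑ ω ∈ range (c η), (genBinom ((ω : ℤ) + d - 2 * k) ω : ℂ) * (-2 : ℂ) ^ ω *
          ∑' m : {m : ℤ // m ≠ 0},
            (((-1 : ℂ) ^ (m : ℤ) + 1) * β m (c η - 1 - ω) η) /
              ((m : ℤ) : ℂ) ^ ((d : ℤ) - 2 * k + ω + 1)) -
      2 * (∑ η ∈ H, ∑ k ∈ range ((d + 1) / 2 + 1),
        riemannZeta (2 * k) * (1 - ((2 : ℂ) ^ (2 * k))⁻¹) *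
        ∑ ω ∈ range (c η), (genBinom ((ω : ℤ) + d - 2 * k) ω : ℂ) * (-2 : ℂ) ^ ω *
          ∑' m : {m : ℤ // m ≠ 0},
            (((-1 : ℂ) ^ (m : ℤ) - 1) * β m (c η - 1 - ω) η) /
              ((m : ℤ) : ℂ) ^ ((d : ℤ) - 2 * k + ω + 1)) = 0 := by
  have hadd : Memℓp (parity + 1) ⊤ := memℓp_top_parity.add memℓp_top_one
  have hsub : Memℓp (parity - 1) ⊤ := memℓp_top_parity.sub memℓp_top_one
  have hP : ∀ η ∈ H, Summable (betaSeries c β η) := fun η hη => summable_betaSeries (hβ η hη)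
  have hparity := primitiveSeries_betaSeries_mul_formalExp_sub hα hβ hconst
  refine ⟨summable_norm_div_zpow hα (by omega),
    fun η hη k _ ω _ => summable_norm_div_zpow (hβ η hη _ (by omega)) (by omega),
    fun η hη k hk ω _ => summable_norm_div_zpow
      (summable_norm_mul hadd (hβ η hη _ (by omega))) (by have := mem_range.1 hk; omega),
    fun η hη k hk ω _ => summable_norm_div_zpow
      (summable_norm_mul hsub (hβ η hη _ (by omega))) (by have := mem_range.1 hk; omega), ?_⟩
  have hseries := tsum_div_pow_sub_add_coeff_sub_coeff_eq_zero c hP hparity d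
  rw [sum_congr rfl fun η hη => coeff_evenZetaSeries_mul_resolventSum_betaSeries hβ d hη,
    coeff_rescale_evenZetaSeries_mul_jumpSeries_betaSeries hβ hadd
      (constantCoeff_jumpSeries_add_one c hP hparity),
    coeff_evenZetaSeries_sub_rescale_mul_jumpSeries_betaSeries hβ hsub] at hseries
  simpa only [zpow_natCast, parity, Pi.add_apply, Pi.sub_apply, Pi.one_apply] using hseries

theorem lemma44 (h : ℕ) (hh : 1 ≤ h) (α : ℤ → ℂ) (β : ℤ → ℕ → ℕ → ℝ) (c : ℕ → ℕ)
    (hc : ∀ η ∈ Finset.Icc 1 h, 1 ≤ c η)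
    (habsα : ∀ ε ∈ ({Complex.I, -Complex.I} : Set ℂ), ∀ θ ∈ Set.Icc (-Real.pi) Real.pi,
      Summable (fun m : {m : ℤ // m ≠ 0} =>
        ‖ε ^ (m : ℤ) * α m * Complex.exp (Complex.I * (m : ℤ) * θ / 2)‖))
    (habsβ : ∀ ε ∈ ({Complex.I, -Complex.I} : Set ℂ), ∀ θ ∈ Set.Icc (-Real.pi) Real.pi,
      ∀ η ∈ Finset.Icc 1 h, ∀ j ≤ c η,
      Summable (fun m : {m : ℤ // m ≠ 0} =>
        ‖ε ^ (m : ℤ) * ((β m j η : ℝ) : ℂ) * Complex.exp (Complex.I * (m : ℤ) * θ / 2)‖))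
    (hconst : ∀ ε ∈ ({Complex.I, -Complex.I} : Set ℂ), ∃ C : ℂ,
      ∀ θ ∈ Set.Icc (-Real.pi) Real.pi, Rpm h c α β ε θ = C) :
    ∀ d : ℕ, 1 ≤ d →
      (Summable (fun m : {m : ℤ // m ≠ 0} => ‖α m / ((m : ℤ) : ℂ) ^ (d : ℤ)‖)) ∧
      (∀ η ∈ Finset.Icc 1 h, ∀ k ∈ Finset.range (c η / 2 + 1),
        ∀ ω ∈ Finset.range (c η - 2 * k + 1),
        Summable (fun m : {m : ℤ // m ≠ 0} =>
          ‖((β m (c η - 2 * k - ω) η : ℝ) : ℂ) / ((m : ℤ) : ℂ) ^ ((d : ℤ) + ω)‖)) ∧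
      (∀ η ∈ Finset.Icc 1 h, ∀ k ∈ Finset.range (d / 2 + 1), ∀ ω ∈ Finset.range (c η),
        Summable (fun m : {m : ℤ // m ≠ 0} =>
          ‖(((-1 : ℂ) ^ (m : ℤ) + 1) * ((β m (c η - 1 - ω) η : ℝ) : ℂ)) /
            ((m : ℤ) : ℂ) ^ ((d : ℤ) - 2 * k + ω + 1)‖)) ∧
      (∀ η ∈ Finset.Icc 1 h, ∀ k ∈ Finset.range ((d + 1) / 2 + 1), ∀ ω ∈ Finset.range (c η),
        Summable (fun m : {m : ℤ // m ≠ 0} =>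
          ‖(((-1 : ℂ) ^ (m : ℤ) - 1) * ((β m (c η - 1 - ω) η : ℝ) : ℂ)) /
            ((m : ℤ) : ℂ) ^ ((d : ℤ) - 2 * k + ω + 1)‖)) ∧
      (∑' m : {m : ℤ // m ≠ 0}, α m / ((m : ℤ) : ℂ) ^ (d : ℤ)) -
        2 * (∑ η ∈ Finset.Icc 1 h, ∑ k ∈ Finset.range (c η / 2 + 1),
          riemannZeta (2 * k) *
            ∑ ω ∈ Finset.range (c η - 2 * k + 1),
              (genBinom ((ω : ℤ) + d - 1) ω : ℂ) * (-2 : ℂ) ^ ω *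
                ∑' m : {m : ℤ // m ≠ 0},
                  ((β m (c η - 2 * k - ω) η : ℝ) : ℂ) / ((m : ℤ) : ℂ) ^ ((d : ℤ) + ω)) +
        2 * (∑ η ∈ Finset.Icc 1 h, ∑ k ∈ Finset.range (d / 2 + 1),
          riemannZeta (2 * k) * ((2 : ℂ) ^ (2 * k))⁻¹ *
            ∑ ω ∈ Finset.range (c η),
              (genBinom ((ω : ℤ) + d - 2 * k) ω : ℂ) * (-2 : ℂ) ^ ω *
                ∑' m : {m : ℤ // m ≠ 0},
                  (((-1 : ℂ) ^ (m : ℤ) + 1) * ((β m (c η - 1 - ω) η : ℝ) : ℂ)) /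
                    ((m : ℤ) : ℂ) ^ ((d : ℤ) - 2 * k + ω + 1)) -
        2 * (∑ η ∈ Finset.Icc 1 h, ∑ k ∈ Finset.range ((d + 1) / 2 + 1),
          riemannZeta (2 * k) * (1 - ((2 : ℂ) ^ (2 * k))⁻¹) *
            ∑ ω ∈ Finset.range (c η),
              (genBinom ((ω : ℤ) + d - 2 * k) ω : ℂ) * (-2 : ℂ) ^ ω *
                ∑' m : {m : ℤ // m ≠ 0},
                  (((-1 : ℂ) ^ (m : ℤ) - 1) * ((β m (c η - 1 - ω) η : ℝ) : ℂ)) /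
                    ((m : ℤ) : ℂ) ^ ((d : ℤ) - 2 * k + ω + 1)) = 0 := by
  have hzero : (0 : ℝ) ∈ Set.Icc (-Real.pi) Real.pi := by simp [Real.pi_pos.le]
  exact fun d _ => lemma44_general (Icc 1 h) α (fun m j η => β m j η) c
    (by simpa only [norm_zpow_mul_mul_exp norm_I] using habsα I (by simp) 0 hzero)
    (by simpa only [norm_zpow_mul_mul_exp norm_I] using habsβ I (by simp) 0 hzero) hconst d
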